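/- Let K be a field with at least 13 elements and S a smooth cubic surface in P^3 over K. Let ℓ be a K-line contained in S, and let P ∈ ℓ(K) be a point that does not lie on any other line contained in S. Then ℓ(K) ⊆ Γ_P(K) ⊆ Span({P}). -/

import Mathlib

/- Common framework: points, lines, intersection divisors, the secant-tangent span,
the groups `H_S(K)`, geometric notions over the algebraic closure, and topologies. -/

open MvPolynomial

noncomputable section

namespace CubicSurf

variable {K L : Type*} [Field K] [Field L] {n : ℕ}

/-- The set of `K`-rational points of the projective hypersurface `F = 0`. -/
def zeroSet (F : MvPolynomial (Fin n) K) : Set (Projectivization K (Fin n → K)) :=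
  {P | eval P.rep F = 0}

/-- The binary form obtained by restricting `F` to the line spanned by `u` and `v`,
via the parametrization `(s : t) ↦ s • u + t • v`. -/
def lineRestrict (F : MvPolynomial (Fin n) K) (u v : Fin n → K) : MvPolynomial (Fin 2) K :=
  aeval (fun i => C (u i) * X 0 + C (v i) * X 1) F

/-- A projective line: a 2-dimensional linear subspace of `K^n`. -/
def IsLine (W : Submodule K (Fin n → K)) : Prop := Module.finrank K W = 2

/-- The line `W` lies (geometrically) on the hypersurface `F = 0`. -/
def LineOnSurf (F : MvPolynomial (Fin n) K) (W : Submodule K (Fin n → K)) : Prop :=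
  ∀ u v : Fin n → K, u ∈ W → v ∈ W → lineRestrict F u v = 0

/-- The projective point `P` lies on the line `W`. -/
def OnLine (W : Submodule K (Fin n → K)) (P : Projectivization K (Fin n → K)) : Prop :=
  P.rep ∈ W

/-- The set of `K`-points of the line `W`. -/
def linePts (W : Submodule K (Fin n → K)) : Set (Projectivization K (Fin n → K)) :=
  {P | OnLine W P}

/-- `ℓ · S = P + Q + R`: the intersection divisor (with multiplicities) of the line `W`
with the hypersurface `F = 0` is `P + Q + R`. -/
def MeetsIn (F : MvPolynomial (Fin n) K) (W : Submodule K (Fin n → K))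
    (P Q R : Projectivization K (Fin n → K)) : Prop :=
  ∃ (u v : Fin n → K) (_ : u ∈ W) (_ : v ∈ W) (_ : LinearIndependent K ![u, v])
    (c : K) (l m : Fin 3 → K) (h : ∀ k, l k • u + m k • v ≠ 0),
      c ≠ 0 ∧
      lineRestrict F u v = C c * ∏ k : Fin 3, (C (m k) * X 0 - C (l k) * X 1) ∧
      Projectivization.mk K _ (h 0) = P ∧
      Projectivization.mk K _ (h 1) = Q ∧
      Projectivization.mk K _ (h 2) = R

/-- Membership in the span of a set of points under the secant/tangent process:
the smallest subset of `S(K)` containing `B` such that whenever `P`, `Q` are in it and a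
`K`-line `ℓ ⊄ S` satisfies `ℓ·S = P+Q+R` with `R ∈ S(K)`, then `R` is in it. -/
inductive SpanMem (F : MvPolynomial (Fin n) K) (B : Set (Projectivization K (Fin n → K))) :
    Projectivization K (Fin n → K) → Prop
  | base (P : Projectivization K (Fin n → K)) (hP : P ∈ B) : SpanMem F B P
  | secant (P Q R : Projectivization K (Fin n → K)) (W : Submodule K (Fin n → K))
      (hW : IsLine W) (hWS : ¬ LineOnSurf F W) (hP : SpanMem F B P) (hQ : SpanMem F B Q)
      (hR : R ∈ zeroSet F) (hm : MeetsIn F W P Q R) : SpanMem F B R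

/-- The span of a set of points under the secant/tangent process. -/
def Span (F : MvPolynomial (Fin n) K) (B : Set (Projectivization K (Fin n → K))) :
    Set (Projectivization K (Fin n → K)) :=
  {P | SpanMem F B P}

/-- Smoothness of the projective hypersurface `F = 0`: over the algebraic closure there is
no nonzero common zero of `F` and all of its partial derivatives. -/
def IsSmoothHypersurf (F : MvPolynomial (Fin n) K) : Prop :=
  ∀ v : Fin n → AlgebraicClosure K,
    eval v (MvPolynomial.map (algebraMap K (AlgebraicClosure K)) F) = 0 →
    (∀ i, eval v (pderiv i (MvPolynomial.map (algebraMap K (AlgebraicClosure K)) F)) = 0) →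
    v = 0

/-- A smooth cubic hypersurface. -/
def SmoothCubic (F : MvPolynomial (Fin n) K) : Prop :=
  F.IsHomogeneous 3 ∧ IsSmoothHypersurf F

/-- The linear form cutting out the tangent plane `Π_P` of `F = 0` at `P`,
evaluated at the representative of a point `Q`; `Q ∈ Π_P` iff this vanishes. -/
def tangentEval (F : MvPolynomial (Fin n) K) (P Q : Projectivization K (Fin n → K)) : K :=
  ∑ i, eval P.rep (pderiv i F) * Q.rep i

/-- The set of `K`-points of the tangent plane `Π_P`. -/
def tangentPlanePts (F : MvPolynomial (Fin n) K) (P : Projectivization K (Fin n → K)) :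
    Set (Projectivization K (Fin n → K)) :=
  {Q | tangentEval F P Q = 0}

/-- The set of `K`-points of `Γ_P = S ∩ Π_P`. -/
def GammaPts (F : MvPolynomial (Fin n) K) (P : Projectivization K (Fin n → K)) :
    Set (Projectivization K (Fin n → K)) :=
  zeroSet F ∩ tangentPlanePts F P

/-! ### Base change along a field embedding -/

/-- Base change of a vector along a field embedding. -/
def clVec (φ : K →+* L) (v : Fin n → K) : Fin n → L := fun i => φ (v i)

lemma clVec_ne_zero (φ : K →+* L) {v : Fin n → K} (hv : v ≠ 0) : clVec φ v ≠ 0 := by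
  intro h
  apply hv
  funext i
  have := congrFun h i
  simpa [clVec] using φ.injective (by simpa [clVec] using this)

/-- Base change of a projective point along a field embedding. -/
def clPt (φ : K →+* L) (P : Projectivization K (Fin n → K)) :
    Projectivization L (Fin n → L) :=
  Projectivization.mk L (clVec φ P.rep) (clVec_ne_zero φ P.rep_nonzero)

lemma eval_smul_of_isHomogeneous {R : Type*} [CommSemiring R] {F : MvPolynomial (Fin n) R}
    {d : ℕ} (hF : F.IsHomogeneous d) (a : R) (w : Fin n → R) :
    eval (a • w) F = a ^ d * eval w F := by
  classical
  rw [eval_eq', eval_eq', Finset.mul_sum]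
  refine Finset.sum_congr rfl fun s hs => ?_
  have hdeg : ∑ i, s i = d := by
    have h1 := hF (MvPolynomial.mem_support_iff.mp hs)
    rw [Finsupp.weight_apply] at h1
    rw [← h1, Finsupp.sum_fintype]
    · simp
    · intro i; simp
  have key : ∀ i : Fin n, (a • w) i ^ s i = a ^ s i * w i ^ s i := by
    intro i; simp [mul_pow]
  rw [Finset.prod_congr rfl (fun i _ => key i), Finset.prod_mul_distrib,
    Finset.prod_pow_eq_pow_sum, hdeg]
  ring

lemma clVec_eval (φ : K →+* L) (F : MvPolynomial (Fin n) K) (v : Fin n → K) :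
    eval (clVec φ v) (MvPolynomial.map φ F) = φ (eval v F) := by
  rw [eval_map]
  have h : φ (eval v F) = φ (eval₂Hom (RingHom.id K) v F) := rfl
  rw [h, map_eval₂Hom]
  rfl

/-- A point given by a vector on which a homogeneous `F` vanishes lies in the zero set. -/
lemma mk_mem_zeroSet {F : MvPolynomial (Fin n) K} {d : ℕ} (hF : F.IsHomogeneous d)
    {v : Fin n → K} (hv : v ≠ 0) (h : eval v F = 0) :
    Projectivization.mk K v hv ∈ zeroSet F := by
  obtain ⟨a, ha⟩ := Projectivization.exists_smul_eq_mk_rep K v hv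
  show eval (Projectivization.mk K v hv).rep F = 0
  have hrep : (Projectivization.mk K v hv).rep = (a : K) • v := by
    rw [← ha, Units.smul_def]
  rw [hrep, eval_smul_of_isHomogeneous hF, h, mul_zero]

lemma clPt_mem_zeroSet (φ : K →+* L) {F : MvPolynomial (Fin n) K} {d : ℕ}
    (hF : F.IsHomogeneous d) {P : Projectivization K (Fin n → K)} (hP : P ∈ zeroSet F) :
    clPt φ P ∈ zeroSet (MvPolynomial.map φ F) := by
  apply mk_mem_zeroSet (hF.map φ)
  rw [clVec_eval, hP, map_zero]

/-- The induced map on points of `S` under base change of the field. -/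
def ptMap (φ : K →+* L) {F : MvPolynomial (Fin n) K} {d : ℕ} (hF : F.IsHomogeneous d)
    (P : zeroSet F) : zeroSet (MvPolynomial.map φ F) :=
  ⟨clPt φ P.1, clPt_mem_zeroSet φ hF P.2⟩

/-- A subspace of `L^n` is defined over `K` (w.r.t. `φ : K →+* L`) if it is spanned by
the base change of a `K`-subspace. -/
def DefinedOver (φ : K →+* L) (W : Submodule L (Fin n → L)) : Prop :=
  ∃ W₀ : Submodule K (Fin n → K), W = Submodule.span L (clVec φ '' (W₀ : Set (Fin n → K)))

/-! ### Asymptotic lines, parabolic points, Eckardt points -/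

/-- The line `W` is asymptotic to `F = 0` at `P`: the intersection multiplicity
`(ℓ · S)_P` is at least 3. -/
def AsymptoticAt (F : MvPolynomial (Fin n) K) (W : Submodule K (Fin n → K))
    (P : Projectivization K (Fin n → K)) : Prop :=
  IsLine W ∧ P.rep ∈ W ∧
    ∃ v ∈ W, LinearIndependent K ![P.rep, v] ∧
      ∃ c : K, lineRestrict F P.rep v = C c * (X 1) ^ 3

/-- The set of asymptotic lines at `P`. -/
def AsymSet (F : MvPolynomial (Fin n) K) (P : Projectivization K (Fin n → K)) :
    Set (Submodule K (Fin n → K)) :=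
  {W | AsymptoticAt F W P}

/-- A point of a hypersurface is parabolic (relative to the given field) if it does
not have exactly two distinct asymptotic lines (i.e. it has one or infinitely many). -/
def ParabolicAt (F : MvPolynomial (Fin n) K) (P : Projectivization K (Fin n → K)) : Prop :=
  ¬ ∃ W₁ W₂ : Submodule K (Fin n → K), W₁ ≠ W₂ ∧ AsymSet F P = {W₁, W₂}

/-- An Eckardt point (relative to the given field): three distinct lines lying on the
surface pass through `P`. -/
def EckardtAt (F : MvPolynomial (Fin n) K) (P : Projectivization K (Fin n → K)) : Prop :=
  ∃ W₁ W₂ W₃ : Submodule K (Fin n → K), W₁ ≠ W₂ ∧ W₁ ≠ W₃ ∧ W₂ ≠ W₃ ∧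
    (∀ W ∈ ({W₁, W₂, W₃} : Set (Submodule K (Fin n → K))),
      IsLine W ∧ LineOnSurf F W ∧ OnLine W P)

section geometric

variable (F : MvPolynomial (Fin n) K)

/-- `F` base changed to the algebraic closure of `K`. -/
def clF : MvPolynomial (Fin n) (AlgebraicClosure K) :=
  MvPolynomial.map (algebraMap K (AlgebraicClosure K)) F

/-- A `K`-point of `S` is parabolic (a geometric notion, checked over `K̄`). -/
def IsParabolic (P : Projectivization K (Fin n → K)) : Prop :=
  ParabolicAt (clF F) (clPt (algebraMap K (AlgebraicClosure K)) P)

/-- A `K`-point of `S` is an Eckardt point (a geometric notion, checked over `K̄`). -/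
def IsEckardt (P : Projectivization K (Fin n → K)) : Prop :=
  EckardtAt (clF F) (clPt (algebraMap K (AlgebraicClosure K)) P)

/-- A `K`-point of `S` is `K`-hyperbolic: it has exactly two asymptotic lines over `K̄`,
and both are defined over `K`. -/
def IsHyperbolic (P : Projectivization K (Fin n → K)) : Prop :=
  ∃ W₁ W₂, W₁ ≠ W₂ ∧
    AsymSet (clF F) (clPt (algebraMap K (AlgebraicClosure K)) P) = {W₁, W₂} ∧
    DefinedOver (algebraMap K (AlgebraicClosure K)) W₁ ∧
    DefinedOver (algebraMap K (AlgebraicClosure K)) W₂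

/-- A `K`-point of `S` is `K`-ternary: at least one of the asymptotic lines of `S`
through `P` is defined over `K`. -/
def IsTernary (P : Projectivization K (Fin n → K)) : Prop :=
  ∃ W ∈ AsymSet (clF F) (clPt (algebraMap K (AlgebraicClosure K)) P),
    DefinedOver (algebraMap K (AlgebraicClosure K)) W

end geometric

/-! ### The group `H_S(K)` -/

variable (F : MvPolynomial (Fin n) K)

/-- `G_S(K)`: the free abelian group on the set `S(K)`. -/
abbrev GS := FreeAbelianGroup (zeroSet F)

/-- The degree homomorphism `G_S(K) → ℤ`, `Σ aᵢ Pᵢ ↦ Σ aᵢ`. -/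
def degHom : GS F →+ ℤ := FreeAbelianGroup.lift fun _ => (1 : ℤ)

/-- `P + Q + R` is a "three point sum": either cut out on `S` with multiplicity by a
`K`-line not contained in `S`, or `P`, `Q`, `R` all lie on a `K`-line contained in `S`. -/
def TripleRel (P Q R : zeroSet F) : Prop :=
  ∃ W : Submodule K (Fin n → K), IsLine W ∧
    ((¬ LineOnSurf F W ∧ MeetsIn F W P.1 Q.1 R.1) ∨
      (LineOnSurf F W ∧ OnLine W P.1 ∧ OnLine W Q.1 ∧ OnLine W R.1))

/-- `G'_S(K)`: the subgroup generated by all three point sums. -/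
def Gp : AddSubgroup (GS F) :=
  AddSubgroup.closure {x | ∃ P Q R : zeroSet F, TripleRel F P Q R ∧
    x = FreeAbelianGroup.of P + FreeAbelianGroup.of Q + FreeAbelianGroup.of R}

/-- `G''_S(K)`: the degree-0 part of `G'_S(K)`. -/
def Gpp : AddSubgroup (GS F) := Gp F ⊓ (degHom F).ker

/-- `H_S(K) = G_S(K)/G''_S(K)`. -/
abbrev HS := GS F ⧸ Gpp F

/-- The class `[P] ∈ H_S(K)` of a point `P ∈ S(K)`. -/
def HClass (P : zeroSet F) : HS F := QuotientAddGroup.mk' (Gpp F) (FreeAbelianGroup.of P)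

/-- The degree homomorphism `H_S(K) → ℤ`. -/
def HdegHom : HS F →+ ℤ :=
  QuotientAddGroup.lift (Gpp F) (degHom F) (fun _ hx => hx.2)

/-- `H⁰_S(K)`: the degree-0 part of `H_S(K)`. -/
def H0 : AddSubgroup (HS F) := (HdegHom F).ker

@[simp] lemma HdegHom_HClass (P : zeroSet F) : HdegHom F (HClass F P) = 1 := by
  simp [HdegHom, HClass, degHom]

/-- The class `[P] - [Q]`, as an element of `H⁰_S(K)`. -/
def H0diff (P Q : zeroSet F) : H0 F :=
  ⟨HClass F P - HClass F Q, by simp [H0, AddMonoidHom.mem_ker, map_sub]⟩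

/-! ### mod-`p` dimensions and torsion -/

/-- `A/pA` for an abelian group `A`. -/
abbrev ModP (p : ℕ) (A : Type*) [AddCommGroup A] : Type _ :=
  A ⧸ (AddMonoidHom.range (nsmulAddMonoidHom p : A →+ A))

instance ModP.instModule (p : ℕ) (A : Type*) [AddCommGroup A] : Module (ZMod p) (ModP p A) :=
  QuotientAddGroup.zmodModule (fun x => ⟨x, rfl⟩)

/-- `dim_{F_p} A/pA`. -/
def dimModP (p : ℕ) (A : Type*) [AddCommGroup A] : Cardinal := Module.rank (ZMod p) (ModP p A)

/-- The `k`-torsion subgroup `A[k]` of an abelian group `A`. -/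
def torsion (k : ℕ) (A : Type*) [AddCommGroup A] : AddSubgroup A :=
  (nsmulAddMonoidHom k : A →+ A).ker

instance torsion.instModule (k : ℕ) (A : Type*) [AddCommGroup A] :
    Module (ZMod k) (torsion k A) :=
  AddCommGroup.zmodModule (fun x => Subtype.ext x.2)

/-- `dim_{F_k} A[k]`: the dimension of the `k`-torsion subgroup (for `k` prime). -/
def dimTorsion (k : ℕ) (A : Type*) [AddCommGroup A] : Cardinal :=
  Module.rank (ZMod k) (torsion k A)

/-! ### Topologies -/

/-- The quotient topology on projective space induced by the topology of `K`. -/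
def projTop (K : Type*) [Field K] [TopologicalSpace K] (n : ℕ) :
    TopologicalSpace (Projectivization K (Fin n → K)) :=
  TopologicalSpace.coinduced
    (fun v : {v : Fin n → K // v ≠ 0} => Projectivization.mk K v.1 v.2) inferInstance

/-- The induced topology on the set of `K`-points of `S`. -/
def surfTop (F : MvPolynomial (Fin n) K) [TopologicalSpace K] :
    TopologicalSpace (zeroSet F) :=
  TopologicalSpace.induced Subtype.val (projTop K n)

/-- `K` (a topological field) is a local field: it is isomorphic, as a topological field,
to `ℝ`, to `ℂ`, or to a finite extension of `ℚ_p` for some prime `p` (with its canonical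
topology, namely the `ℚ_p`-vector space topology). -/
def IsLocalField (K : Type*) [Field K] [TopologicalSpace K] : Prop :=
  (∃ e : K ≃+* ℝ, IsHomeomorph e) ∨ (∃ e : K ≃+* ℂ, IsHomeomorph e) ∨
    (∃ (p : ℕ), p.Prime ∧ ∃ (_ : Fact p.Prime) (f : ℚ_[p] →+* K) (m : ℕ)
      (e : K ≃+ (Fin m → ℚ_[p])),
      (∀ (c : ℚ_[p]) (x : K), e (f c * x) = c • e x) ∧ IsHomeomorph e)

end CubicSurf

/-!
Let `C` be the conic residual to `ℓ` in the tangent plane at `P`; it passes through `P`. It does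
not contain `ℓ`, as the tangent plane is not constant along `ℓ`, so if `C` were singular, it would
contain a second line through `P` over the algebraic closure. Hence `C` is smooth, and the line
joining `P` to a point `c` of `C` off `ℓ` is tangent to the surface at `P`, which puts `c` in the
span of `P`. The line joining `c` to a point `q` of `ℓ` off `C` meets the surface again in a point
of `C` off `ℓ`, which puts `q` in the span. The remaining points of `ℓ`, at most two, are reached
by the same argument starting from another point `u + tv` of `ℓ` that is already in the span. This
works as soon as a quadratic polynomial and a polynomial of degree at most `10` do not vanish at
`t`, whence the bound `13`.
-/

namespace CubicSurf

section Polarization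

variable {R A : Type*} [CommRing R] [CommRing A] {n : ℕ}

/-- The differential `v ↦ ∑ i, ∂ᵢF(u) vᵢ` of a polynomial `F` at `u`; its kernel is the cone over
the tangent space at a point `u` of the hypersurface `F = 0`. -/
def tangentForm (F : MvPolynomial (Fin n) R) (u : Fin n → R) : (Fin n → R) →ₗ[R] R :=
  ∑ i, eval u (pderiv i F) • LinearMap.proj i

/-- The second differential `(v, w) ↦ ∑ i j, ∂ⱼ∂ᵢF(u) vⱼ wᵢ` of `F` at `u`. For a cubic form it is
the symmetric trilinear form in `(u, v, w)` obtained by full polarization. -/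
def polarForm (F : MvPolynomial (Fin n) R) (u v : Fin n → R) : (Fin n → R) →ₗ[R] R :=
  ∑ i, tangentForm (pderiv i F) u v • LinearMap.proj i

lemma tangentForm_apply (F : MvPolynomial (Fin n) R) (u v : Fin n → R) :
    tangentForm F u v = ∑ i, eval u (pderiv i F) * v i := by
  simp [tangentForm]

lemma polarForm_apply (F : MvPolynomial (Fin n) R) (u v w : Fin n → R) :
    polarForm F u v w = ∑ i, tangentForm (pderiv i F) u v * w i := by
  simp [polarForm]

lemma tangentForm_zero (u v : Fin n → R) :
    tangentForm (0 : MvPolynomial (Fin n) R) u v = 0 := by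
  simp [tangentForm_apply]

lemma tangentForm_add_left (F G : MvPolynomial (Fin n) R) (u v : Fin n → R) :
    tangentForm (F + G) u v = tangentForm F u v + tangentForm G u v := by
  simp [tangentForm_apply, add_mul, Finset.sum_add_distrib]

lemma tangentForm_smul_left (c : R) (F : MvPolynomial (Fin n) R) (u v : Fin n → R) :
    tangentForm (c • F) u v = c * tangentForm F u v := by
  simp [tangentForm_apply, mul_assoc, Finset.mul_sum, smul_eval]

lemma tangentForm_mul (F G : MvPolynomial (Fin n) R) (u v : Fin n → R) :
    tangentForm (F * G) u v = tangentForm F u v * eval u G + eval u F * tangentForm G u v := by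
  simp only [tangentForm_apply, pderiv_mul, map_add, map_mul, Finset.sum_mul, Finset.mul_sum,
    ← Finset.sum_add_distrib]
  exact Finset.sum_congr rfl fun i _ ↦ by ring

lemma tangentForm_X (i : Fin n) (u v : Fin n → R) :
    tangentForm (X i : MvPolynomial (Fin n) R) u v = v i := by
  simp [tangentForm_apply, pderiv_X, Pi.single_apply, apply_ite]

lemma polarForm_zero (u v w : Fin n → R) :
    polarForm (0 : MvPolynomial (Fin n) R) u v w = 0 := by
  simp [polarForm_apply, tangentForm_zero]

lemma polarForm_add_left (F G : MvPolynomial (Fin n) R) (u v w : Fin n → R) :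
    polarForm (F + G) u v w = polarForm F u v w + polarForm G u v w := by
  simp [polarForm_apply, tangentForm_add_left, add_mul, Finset.sum_add_distrib]

lemma polarForm_smul_left (c : R) (F : MvPolynomial (Fin n) R) (u v w : Fin n → R) :
    polarForm (c • F) u v w = c * polarForm F u v w := by
  simp [polarForm_apply, tangentForm_smul_left, mul_assoc, Finset.mul_sum]

lemma polarForm_mul (F G : MvPolynomial (Fin n) R) (u v w : Fin n → R) :
    polarForm (F * G) u v w = polarForm F u v w * eval u G + tangentForm F u v * tangentForm G u w
      + tangentForm F u w * tangentForm G u v + eval u F * polarForm G u v w := by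
  simp only [polarForm_apply, pderiv_mul, tangentForm_add_left, tangentForm_mul]
  simp only [tangentForm_apply F u w, tangentForm_apply G u w, Finset.sum_mul, Finset.mul_sum,
    ← Finset.sum_add_distrib]
  exact Finset.sum_congr rfl fun i _ ↦ by ring

lemma polarForm_X (i : Fin n) (u v w : Fin n → R) :
    polarForm (X i : MvPolynomial (Fin n) R) u v w = 0 := by
  have h (j : Fin n) : tangentForm (pderiv j (X i : MvPolynomial (Fin n) R)) u v = 0 := by
    by_cases hij : i = j <;> simp [tangentForm_apply, pderiv_X, hij]
  simp only [polarForm_apply, h, zero_mul, Finset.sum_const_zero]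

lemma tangentForm_map (φ : R →+* A) (F : MvPolynomial (Fin n) R) (u v : Fin n → R) :
    tangentForm (map φ F) (φ ∘ u) (φ ∘ v) = φ (tangentForm F u v) := by
  simp [tangentForm_apply, pderiv_map, eval_map, eval₂_comp]

lemma polarForm_map (φ : R →+* A) (F : MvPolynomial (Fin n) R) (u v w : Fin n → R) :
    polarForm (map φ F) (φ ∘ u) (φ ∘ v) (φ ∘ w) = φ (polarForm F u v w) := by
  simp [polarForm_apply, pderiv_map, tangentForm_map]

variable {F : MvPolynomial (Fin n) R}

open scoped Pointwise in
@[elab_as_elim]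
lemma isHomogeneous_three_induction {σ : Type*} {p : MvPolynomial σ R → Prop}
    (zero : p 0) (add : ∀ F G, p F → p G → p (F + G)) (smul : ∀ (c : R) F, p F → p (c • F))
    (prod : ∀ i j k, p (X i * X j * X k)) {F : MvPolynomial σ R} (hF : F.IsHomogeneous 3) :
    p F := by
  have hspan : F ∈ Submodule.span R (Set.range (X : σ → MvPolynomial σ R) ^ 3) := by
    rw [← Submodule.span_pow, ← homogeneousSubmodule_one_eq_span_X, homogeneousSubmodule_one_pow]
    exact hF
  clear hF
  induction hspan using Submodule.span_induction with
  | mem G hG =>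
    simp only [pow_succ, pow_zero, one_mul, Set.mem_mul, Set.mem_range] at hG
    obtain ⟨_, ⟨_, ⟨i, rfl⟩, _, ⟨j, rfl⟩, rfl⟩, _, ⟨k, rfl⟩, rfl⟩ := hG
    exact prod i j k
  | zero => exact zero
  | add G H _ _ hG hH => exact add G H hG hH
  | smul c G _ hG => exact smul c G hG

lemma eval_add_of_isHomogeneous_three (hF : F.IsHomogeneous 3) (u v : Fin n → R) :
    eval (u + v) F = eval u F + tangentForm F u v + tangentForm F v u + eval v F := by
  refine isHomogeneous_three_induction (by simp [tangentForm_zero]) (fun G H hG hH ↦ ?_)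
    (fun c G hG ↦ ?_) (fun i j k ↦ ?_) hF
  · simp only [map_add, tangentForm_add_left, hG, hH]; ring
  · simp only [smul_eval, tangentForm_smul_left, hG]; ring
  · simp only [map_mul, eval_X, tangentForm_mul, tangentForm_X, Pi.add_apply]; ring

lemma tangentForm_add (hF : F.IsHomogeneous 3) (u v w : Fin n → R) :
    tangentForm F (u + v) w = tangentForm F u w + polarForm F u v w + tangentForm F v w := by
  refine isHomogeneous_three_induction (by simp [tangentForm_zero, polarForm_zero])
    (fun G H hG hH ↦ ?_) (fun c G hG ↦ ?_) (fun i j k ↦ ?_) hF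
  · simp only [tangentForm_add_left, polarForm_add_left, hG, hH]; ring
  · simp only [tangentForm_smul_left, polarForm_smul_left, hG]; ring
  · simp only [map_mul, eval_X, tangentForm_mul, tangentForm_X, polarForm_mul, polarForm_X,
      Pi.add_apply]
    ring

lemma polarForm_comm (hF : F.IsHomogeneous 3) (u v w : Fin n → R) :
    polarForm F u v w = polarForm F v u w := by
  have h := tangentForm_add hF u v w
  rw [add_comm u, tangentForm_add hF] at h
  linear_combination -h

lemma polarForm_right_comm (hF : F.IsHomogeneous 3) (u v w : Fin n → R) :
    polarForm F u v w = polarForm F u w v := by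
  refine isHomogeneous_three_induction (by simp [polarForm_zero])
    (fun G H hG hH ↦ ?_) (fun c G hG ↦ ?_) (fun i j k ↦ ?_) hF
  · simp only [polarForm_add_left, hG, hH]
  · simp only [polarForm_smul_left, hG]
  · simp only [map_mul, eval_X, tangentForm_mul, tangentForm_X, polarForm_mul, polarForm_X]
    ring

lemma tangentForm_smul (hF : F.IsHomogeneous 3) (a : R) (u w : Fin n → R) :
    tangentForm F (a • u) w = a ^ 2 * tangentForm F u w := by
  simp only [tangentForm_apply, eval_smul_of_isHomogeneous hF.pderiv, Finset.mul_sum, mul_assoc]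

lemma tangentForm_self (hF : F.IsHomogeneous 3) (u : Fin n → R) :
    tangentForm F u u = 3 * eval u F := by
  have h := congrArg (eval u) hF.sum_X_mul_pderiv
  simpa [tangentForm_apply, mul_comm] using h

lemma polarForm_self (hF : F.IsHomogeneous 3) (u w : Fin n → R) :
    polarForm F u u w = 2 * tangentForm F u w := by
  have h := tangentForm_add hF u u w
  rw [← two_smul R u, tangentForm_smul hF] at h
  linear_combination -h

lemma polarForm_add_middle (hF : F.IsHomogeneous 3) (u v v' w : Fin n → R) :
    polarForm F u (v + v') w = polarForm F u v w + polarForm F u v' w := by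
  simp only [polarForm_right_comm hF u _ w, map_add]

lemma polarForm_smul_middle (hF : F.IsHomogeneous 3) (a : R) (u v w : Fin n → R) :
    polarForm F u (a • v) w = a * polarForm F u v w := by
  rw [polarForm_right_comm hF, map_smul, polarForm_right_comm hF, smul_eq_mul]

lemma eval_smul_add_smul (hF : F.IsHomogeneous 3) (s t : R) (u v : Fin n → R) :
    eval (s • u + t • v) F = s ^ 3 * eval u F + s ^ 2 * t * tangentForm F u v
      + s * t ^ 2 * tangentForm F v u + t ^ 3 * eval v F := by
  simp only [eval_add_of_isHomogeneous_three hF, eval_smul_of_isHomogeneous hF, tangentForm_smul hF,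
    map_smul, smul_eq_mul]
  ring

lemma tangentForm_smul_add_smul (hF : F.IsHomogeneous 3) (s t : R) (u v w : Fin n → R) :
    tangentForm F (s • u + t • v) w = s ^ 2 * tangentForm F u w + s * t * polarForm F u v w
      + t ^ 2 * tangentForm F v w := by
  rw [tangentForm_add hF, tangentForm_smul hF, tangentForm_smul hF, polarForm_smul_middle hF,
    polarForm_comm hF, polarForm_smul_middle hF, polarForm_comm hF]
  ring

end Polarization

section LineRestrict

variable {K : Type*} [Field K] {n : ℕ} {F : MvPolynomial (Fin n) K}

lemma lineRestrict_eq (hF : F.IsHomogeneous 3) (u v : Fin n → K) :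
    lineRestrict F u v = C (eval u F) * X 0 ^ 3 + C (tangentForm F u v) * X 0 ^ 2 * X 1
      + C (tangentForm F v u) * X 0 * X 1 ^ 2 + C (eval v F) * X 1 ^ 3 := by
  have hmap : lineRestrict F u v =
      eval ((X 0 : MvPolynomial (Fin 2) K) • (C ∘ u) + (X 1 : MvPolynomial (Fin 2) K) • (C ∘ v))
        (map C F) := by
    simp only [lineRestrict, aeval_def, eval_map, algebraMap_eq]
    congr 1
    ext1 i
    simp [mul_comm]
  rw [hmap, eval_smul_add_smul (hF.map C), tangentForm_map, tangentForm_map, eval_map, eval_map,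
    ← eval₂_comp, ← eval₂_comp]
  ring

lemma lineRestrict_eq_zero_iff (hF : F.IsHomogeneous 3) {u v : Fin n → K} :
    lineRestrict F u v = 0 ↔ eval u F = 0 ∧ tangentForm F u v = 0 ∧ tangentForm F v u = 0 ∧
      eval v F = 0 := by
  refine ⟨fun h ↦ ?_, fun ⟨hu, huv, hvu, hv⟩ ↦ by simp [lineRestrict_eq hF, hu, huv, hvu, hv]⟩
  rw [lineRestrict_eq hF] at h
  exact ⟨by simpa using congrArg (eval ![1, 0]) h,
    by simpa [pderiv_X] using congrArg (fun G ↦ eval ![1, 0] (pderiv 1 G)) h,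
    by simpa [pderiv_X] using congrArg (fun G ↦ eval ![0, 1] (pderiv 0 G)) h,
    by simpa using congrArg (eval ![0, 1]) h⟩

lemma lineOnSurf_iff (hF : F.IsHomogeneous 3) {W : Submodule K (Fin n → K)} :
    LineOnSurf F W ↔ ∀ u ∈ W, eval u F = 0 ∧ ∀ v ∈ W, tangentForm F u v = 0 := by
  simp only [LineOnSurf, lineRestrict_eq_zero_iff hF]
  exact ⟨fun h u hu ↦ ⟨(h u u hu hu).1, fun v hv ↦ (h u v hu hv).2.1⟩,
    fun h u v hu hv ↦ ⟨(h u hu).1, (h u hu).2 v hv, (h v hv).2 u hu, (h v hv).1⟩⟩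

lemma LineOnSurf.eval_eq_zero (hF : F.IsHomogeneous 3) {W : Submodule K (Fin n → K)}
    (hW : LineOnSurf F W) {u : Fin n → K} (hu : u ∈ W) : eval u F = 0 :=
  ((lineOnSurf_iff hF).1 hW u hu).1

lemma LineOnSurf.tangentForm_eq_zero (hF : F.IsHomogeneous 3) {W : Submodule K (Fin n → K)}
    (hW : LineOnSurf F W) {u v : Fin n → K} (hu : u ∈ W) (hv : v ∈ W) : tangentForm F u v = 0 :=
  ((lineOnSurf_iff hF).1 hW u hu).2 v hv

lemma lineOnSurf_span_pair_iff (hF : F.IsHomogeneous 3) {u v : Fin n → K} :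
    LineOnSurf F (Submodule.span K {u, v}) ↔ lineRestrict F u v = 0 := by
  refine ⟨fun h ↦ h u v (Submodule.mem_span_of_mem (by simp)) (Submodule.mem_span_of_mem (by simp)),
    fun h ↦ (lineOnSurf_iff hF).2 fun p hp ↦ ?_⟩
  obtain ⟨hu, huv, hvu, hv⟩ := (lineRestrict_eq_zero_iff hF).1 h
  obtain ⟨a, b, rfl⟩ := Submodule.mem_span_pair.1 hp
  refine ⟨by simp [eval_smul_add_smul hF, hu, huv, hvu, hv], fun q hq ↦ ?_⟩
  obtain ⟨c, d, rfl⟩ := Submodule.mem_span_pair.1 hq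
  simp [tangentForm_smul_add_smul hF, tangentForm_self hF, polarForm_self hF,
    polarForm_right_comm hF u v u, polarForm_comm hF u v v, polarForm_right_comm hF v u v,
    hu, huv, hvu, hv]

end LineRestrict

section ResidualConic

variable {R A : Type*} [CommRing R] [CommRing A] {n : ℕ}

/-- The discriminant of the residual conic: if `F` is a cubic form vanishing on the line `⟨u, v⟩`,
then `F(xu + yv + zN) = z q(x, y, z)` for a ternary quadratic form `q`, and this is
`4acf + bde - ae² - cd² - fb²` for `q = ax² + bxy + cy² + dxz + eyz + fz²`. -/
def residualDisc (F : MvPolynomial (Fin n) R) (u v N : Fin n → R) : R :=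
  4 * tangentForm F u N * tangentForm F v N * eval N F
    + polarForm F u v N * tangentForm F N u * tangentForm F N v
    - tangentForm F u N * tangentForm F N v ^ 2
    - tangentForm F v N * tangentForm F N u ^ 2
    - eval N F * polarForm F u v N ^ 2

lemma residualDisc_map (φ : R →+* A) (F : MvPolynomial (Fin n) R) (u v N : Fin n → R) :
    residualDisc (map φ F) (φ ∘ u) (φ ∘ v) (φ ∘ N) = φ (residualDisc F u v N) := by
  simp only [residualDisc, tangentForm_map, polarForm_map, eval_map, ← eval₂_comp, map_add, map_sub,
    map_mul, map_pow, map_ofNat]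

variable {F : MvPolynomial (Fin n) R}

lemma residualDisc_add_smul_left (hF : F.IsHomogeneous 3) (t : R) (u v N : Fin n → R) :
    residualDisc F (u + t • v) v N = residualDisc F u v N := by
  have hu := tangentForm_smul_add_smul hF 1 t u v N
  have huv : polarForm F (u + t • v) v N = polarForm F u v N + 2 * t * tangentForm F v N := by
    rw [polarForm_comm hF, polarForm_add_middle hF, polarForm_smul_middle hF, polarForm_self hF,
      polarForm_comm hF]
    ring
  rw [one_smul] at hu
  simp only [residualDisc, hu, huv, map_add, map_smul, smul_eq_mul]
  ring

lemma residualDisc_smul (hF : F.IsHomogeneous 3) (t : R) (u v N : Fin n → R) :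
    residualDisc F u v (t • N) = t ^ 5 * residualDisc F u v N := by
  simp only [residualDisc, map_smul, smul_eq_mul, tangentForm_smul hF,
    eval_smul_of_isHomogeneous hF]
  ring

end ResidualConic

section SpanCone

variable {K : Type*} [Field K] {n : ℕ}

/-- The cone over `Span F B`: the nonzero vectors representing a point of the span. -/
def spanCone (F : MvPolynomial (Fin n) K) (B : Set (Projectivization K (Fin n → K))) :
    Set (Fin n → K) :=
  {v | ∃ h : v ≠ 0, Projectivization.mk K v h ∈ Span F B}

variable {F : MvPolynomial (Fin n) K} {B : Set (Projectivization K (Fin n → K))}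
  {u v N p : Fin n → K}

lemma rep_mem_spanCone {P : Projectivization K (Fin n → K)} :
    P.rep ∈ spanCone F B ↔ P ∈ Span F B := by
  simp [spanCone, P.rep_nonzero]

lemma eval_lineRestrict (F : MvPolynomial (Fin n) K) (u v : Fin n → K) (s t : K) :
    eval ![s, t] (lineRestrict F u v) = eval (s • u + t • v) F := by
  rw [lineRestrict, aeval_def, algebraMap_eq, hom_eval₂, eval]
  congr 1
  · ext; simp
  · ext; simp [mul_comm]

lemma isLine_span_pair (h : LinearIndependent K ![u, v]) : IsLine (Submodule.span K {u, v}) := by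
  rw [IsLine, ← Matrix.range_cons_cons_empty u v ![], finrank_span_eq_card h, Fintype.card_fin]

lemma mem_spanCone_of_lineRestrict_eq {d : ℕ} (hF : F.IsHomogeneous d)
    (huv : LinearIndependent K ![u, v]) {c : K} (hc : c ≠ 0) {l m : Fin 3 → K}
    (hprod : lineRestrict F u v = C c * ∏ k, (C (m k) * X 0 - C (l k) * X 1))
    (h₀ : l 0 • u + m 0 • v ∈ spanCone F B) (h₁ : l 1 • u + m 1 • v ∈ spanCone F B)
    (h₂ : l 2 • u + m 2 • v ≠ 0) : l 2 • u + m 2 • v ∈ spanCone F B := by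
  obtain ⟨hne₀, h₀⟩ := h₀
  obtain ⟨hne₁, h₁⟩ := h₁
  have hne (k : Fin 3) : l k • u + m k • v ≠ 0 := by fin_cases k <;> assumption
  have hfactor (k : Fin 3) : C (m k) * X 0 - C (l k) * X 1 ≠ (0 : MvPolynomial (Fin 2) K) := by
    intro h
    have hm : m k = 0 := by simpa using congrArg (eval ![1, 0]) h
    have hl : l k = 0 := by simpa using congrArg (eval ![0, 1]) h
    exact hne k (by simp [hm, hl])
  have hnot : ¬ LineOnSurf F (Submodule.span K {u, v}) := fun h ↦ by
    have h0 := h u v (Submodule.mem_span_of_mem (by simp)) (Submodule.mem_span_of_mem (by simp))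
    rw [hprod, mul_eq_zero, C_eq_zero, Finset.prod_eq_zero_iff] at h0
    obtain h0 | ⟨k, -, hk⟩ := h0
    exacts [hc h0, hfactor k hk]
  have hzero : eval (l 2 • u + m 2 • v) F = 0 := by
    simp [← eval_lineRestrict, hprod, Fin.prod_univ_three, mul_comm]
  exact ⟨h₂, .secant _ _ _ _ (isLine_span_pair huv) hnot h₀ h₁ (mk_mem_zeroSet hF h₂ hzero)
    ⟨u, v, Submodule.mem_span_of_mem (by simp), Submodule.mem_span_of_mem (by simp), huv, c, l, m,
      hne, hc, hprod, rfl, rfl, rfl⟩⟩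

lemma linearIndependent_pair_of_tangentForm_ne_zero (hF : F.IsHomogeneous 3) (hu : eval u F = 0)
    (huv : tangentForm F u v ≠ 0) : LinearIndependent K ![u, v] := by
  have hu0 : u ≠ 0 := by
    rintro rfl
    exact huv (by simpa using tangentForm_smul hF (0 : K) 0 v)
  refine (LinearIndependent.pair_iff' hu0).2 fun a h ↦ huv ?_
  rw [← h, map_smul, tangentForm_self hF, hu, mul_zero, smul_zero]

lemma mem_spanCone_of_tangent (hF : F.IsHomogeneous 3) (hu : eval u F = 0) (hv : eval v F = 0)
    (huv : tangentForm F u v = 0) (hvu : tangentForm F v u ≠ 0) (hmem : u ∈ spanCone F B) :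
    v ∈ spanCone F B := by
  have hind := linearIndependent_pair_of_tangentForm_ne_zero hF hv hvu
  have hprod : lineRestrict F u v = C (tangentForm F v u) *
      ∏ k : Fin 3, (C (![0, 0, 1] k) * X 0 - C (![1, 1, 0] k) * X 1) := by
    simp only [lineRestrict_eq hF, hu, hv, huv, Fin.prod_univ_three, Matrix.cons_val,
      C_0, C_1]
    ring
  simpa using mem_spanCone_of_lineRestrict_eq hF (LinearIndependent.pair_symm_iff.1 hind) hvu hprod
    (by simpa using hmem) (by simpa using hmem) (by simpa using hind.ne_zero 0)

/- Since `F(su + tv) = st(s D_u(v) + t D_v(u))`, the third point is `(s, t) = (D_v(u), -D_u(v))`. -/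
lemma mem_spanCone_of_secant (hF : F.IsHomogeneous 3) (hu : eval u F = 0) (hv : eval v F = 0)
    (huv : tangentForm F u v ≠ 0) (hmem : v ∈ spanCone F B)
    (hmem' : tangentForm F v u • u - tangentForm F u v • v ∈ spanCone F B) :
    u ∈ spanCone F B := by
  have hind := linearIndependent_pair_of_tangentForm_ne_zero hF hu huv
  have hprod : lineRestrict F u v = C 1 * ∏ k : Fin 3, (C (![1, -tangentForm F u v, 0] k) * X 0
      - C (![0, tangentForm F v u, 1] k) * X 1) := by
    simp only [lineRestrict_eq hF, hu, hv, Fin.prod_univ_three, Matrix.cons_val,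
      C_0, C_1, C_neg]
    ring
  simpa using mem_spanCone_of_lineRestrict_eq hF hind one_ne_zero hprod
    (by simpa using hmem) (by simpa [sub_eq_add_neg] using hmem') (by simpa using hind.ne_zero 0)

end SpanCone

section Pencil

variable {R : Type*} [CommRing R] {n : ℕ} {F : MvPolynomial (Fin n) R}

lemma exists_eval_ne_zero_and_eval_ne_zero [IsDomain R] {p q : Polynomial R} (hp : p ≠ 0)
    (hq : q ≠ 0) (h : ((p.natDegree + q.natDegree : ℕ) : Cardinal) < Cardinal.mk R) :
    ∃ t, p.eval t ≠ 0 ∧ q.eval t ≠ 0 := by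
  rw [← Polynomial.natDegree_mul hp hq] at h
  obtain ⟨t, ht⟩ := Polynomial.exists_eval_ne_zero_of_natDegree_lt_card _ (mul_ne_zero hp hq) h
  rw [Polynomial.eval_mul] at ht
  exact ⟨t, mul_ne_zero_iff.1 ht⟩

lemma natDegree_eval_map_C_le {d m : ℕ} (hF : F.IsHomogeneous d) {w : Fin n → Polynomial R}
    (hw : ∀ i, (w i).natDegree ≤ m) : (eval w (map Polynomial.C F)).natDegree ≤ d * m := by
  rw [eval_map, ← Polynomial.algebraMap_eq, ← aeval_def]
  exact aeval_natDegree_le F hF.totalDegree_le w hw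

lemma natDegree_tangentForm_map_C_le (hF : F.IsHomogeneous 3) {w w' : Fin n → Polynomial R}
    {m m' : ℕ} (hw : ∀ i, (w i).natDegree ≤ m) (hw' : ∀ i, (w' i).natDegree ≤ m') :
    (tangentForm (map Polynomial.C F) w w').natDegree ≤ 2 * m + m' := by
  rw [tangentForm_apply]
  refine Polynomial.natDegree_sum_le_of_forall_le _ _ fun i _ ↦ ?_
  rw [pderiv_map]
  exact Polynomial.natDegree_mul_le_of_le (natDegree_eval_map_C_le hF.pderiv hw) (hw' i)

lemma natDegree_residualDisc_map_C_le (hF : F.IsHomogeneous 3) (u v : Fin n → R)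
    {N : Fin n → Polynomial R} {m : ℕ} (hN : ∀ i, (N i).natDegree ≤ m) :
    (residualDisc (map Polynomial.C F) (Polynomial.C ∘ u) (Polynomial.C ∘ v) N).natDegree
      ≤ 5 * m := by
  have hC (w : Fin n → R) (i) : ((Polynomial.C ∘ w) i).natDegree ≤ 0 := by simp
  have h₁ (w : Fin n → R) :
      (tangentForm (map Polynomial.C F) (Polynomial.C ∘ w) N).natDegree ≤ m := by
    simpa using natDegree_tangentForm_map_C_le hF (hC w) hN
  have h₂ (w : Fin n → R) :
      (tangentForm (map Polynomial.C F) N (Polynomial.C ∘ w)).natDegree ≤ 2 * m :=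
    natDegree_tangentForm_map_C_le hF hN (hC w)
  have h₃ : (eval N (map Polynomial.C F)).natDegree ≤ 3 * m := natDegree_eval_map_C_le hF hN
  have h₁' :
      (polarForm (map Polynomial.C F) (Polynomial.C ∘ u) (Polynomial.C ∘ v) N).natDegree ≤ m := by
    rw [polarForm_apply]
    refine Polynomial.natDegree_sum_le_of_forall_le _ _ fun i _ ↦ ?_
    rw [pderiv_map, tangentForm_map]
    exact (Polynomial.natDegree_C_mul_le _ _).trans (hN i)
  have hu := h₁ u
  have hv := h₁ v
  have hu' := h₂ u
  have hv' := h₂ v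
  rw [eval_map] at h₃
  rw [residualDisc, eval_map]
  compute_degree
  all_goals omega

/-- The quadratic polynomial `t ↦ tangentForm F (u + t • v) N` of a cubic form `F`. -/
def tangentPencil (F : MvPolynomial (Fin n) R) (u v N : Fin n → R) : Polynomial R :=
  Polynomial.C (tangentForm F v N) * Polynomial.X ^ 2
    + Polynomial.C (polarForm F u v N) * Polynomial.X + Polynomial.C (tangentForm F u N)

lemma eval_tangentPencil (hF : F.IsHomogeneous 3) (u v N : Fin n → R) (t : R) :
    (tangentPencil F u v N).eval t = tangentForm F (u + t • v) N := by
  have h := tangentForm_smul_add_smul hF 1 t u v N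
  rw [one_smul] at h
  rw [h]
  simp only [tangentPencil, Polynomial.eval_add, Polynomial.eval_mul, Polynomial.eval_C,
    Polynomial.eval_pow, Polynomial.eval_X]
  ring

lemma natDegree_tangentPencil_le (F : MvPolynomial (Fin n) R) (u v N : Fin n → R) :
    (tangentPencil F u v N).natDegree ≤ 2 :=
  Polynomial.natDegree_quadratic_le

lemma exists_polynomial_eval_eq_residualDisc (hF : F.IsHomogeneous 3) (u v N M : Fin n → R)
    {a b : Polynomial R} {m : ℕ} (ha : a.natDegree ≤ m) (hb : b.natDegree ≤ m) :
    ∃ r : Polynomial R, r.natDegree ≤ 5 * m ∧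
      ∀ t, r.eval t = residualDisc F u v (b.eval t • N - a.eval t • M) := by
  set N' : Fin n → Polynomial R := b • (Polynomial.C ∘ N) - a • (Polynomial.C ∘ M) with hN'
  refine ⟨residualDisc (map Polynomial.C F) (Polynomial.C ∘ u) (Polynomial.C ∘ v) N',
    natDegree_residualDisc_map_C_le hF u v fun i ↦ ?_, fun t ↦ ?_⟩
  · simp only [hN', Pi.sub_apply, Pi.smul_apply, smul_eq_mul, Function.comp_apply]
    compute_degree
    omega
  · have hC : (Polynomial.evalRingHom t).comp Polynomial.C = RingHom.id R := by ext; simp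
    have hC' (w : Fin n → R) : Polynomial.evalRingHom t ∘ Polynomial.C ∘ w = w := by ext; simp
    have hN't : Polynomial.evalRingHom t ∘ N' = b.eval t • N - a.eval t • M := by
      ext i; simp [hN']
    rw [← Polynomial.coe_evalRingHom, ← residualDisc_map, map_map, hC, map_id, hC', hC', hN't,
      Polynomial.coe_evalRingHom]

lemma exists_tangent_pencil [IsDomain R] (hR : 13 ≤ Cardinal.mk R) (hF : F.IsHomogeneous 3)
    {u v N M : Fin n → R}
    (huN : tangentForm F u N = 0) (huM : tangentForm F u M ≠ 0)
    (hdisc : residualDisc F u v N ≠ 0) :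
    ∃ t : R, tangentForm F (u + t • v) N ≠ 0 ∧ residualDisc F u v
      (tangentForm F (u + t • v) M • N - tangentForm F (u + t • v) N • M) ≠ 0 := by
  have hadeg := natDegree_tangentPencil_le F u v N
  obtain ⟨r, hrdeg, hr⟩ := exists_polynomial_eval_eq_residualDisc hF u v N M hadeg
    (natDegree_tangentPencil_le F u v M)
  have ha : tangentPencil F u v N ≠ 0 := by
    intro h
    have hβ : polarForm F u v N = 0 := by
      simpa [tangentPencil] using congrArg (Polynomial.coeff · 1) h
    have hγ : tangentForm F v N = 0 := by
      simpa [tangentPencil] using congrArg (Polynomial.coeff · 2) h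
    exact hdisc (by simp [residualDisc, huN, hβ, hγ])
  have hr0 : r ≠ 0 := by
    rintro rfl
    refine mul_ne_zero (pow_ne_zero 5 huM) hdisc ?_
    simpa [eval_tangentPencil hF, huN, residualDisc_smul hF] using (hr 0).symm
  have hcard : (((tangentPencil F u v N).natDegree + r.natDegree : ℕ) : Cardinal) <
      Cardinal.mk R :=
    lt_of_lt_of_le (by exact_mod_cast (by omega :
      (tangentPencil F u v N).natDegree + r.natDegree < 13)) hR
  obtain ⟨t, hat, hrt⟩ := exists_eval_ne_zero_and_eval_ne_zero ha hr0 hcard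
  rw [hr] at hrt
  simp only [eval_tangentPencil hF] at hat hrt
  exact ⟨t, hat, hrt⟩

end Pencil

section LineInSpan

lemma span_pair_add_smul {R M : Type*} [CommRing R] [AddCommGroup M] [Module R M] (u v : M)
    (t : R) : Submodule.span R {u + t • v, v} = Submodule.span R {u, v} := by
  have hv {x : M} : t • v ∈ Submodule.span R {x, v} :=
    Submodule.smul_mem _ _ (Submodule.mem_span_of_mem (by simp))
  have hu {x : M} : x ∈ Submodule.span R {x, v} := Submodule.mem_span_of_mem (by simp)
  refine le_antisymm (Submodule.span_le.2 ?_) (Submodule.span_le.2 ?_) <;> rintro x (rfl | rfl)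
  · exact add_mem hu hv
  · exact Submodule.mem_span_of_mem (by simp)
  · simpa using sub_mem (hu (x := x + t • v)) hv
  · exact Submodule.mem_span_of_mem (by simp)

variable {K : Type*} [Field K] {n : ℕ} {F : MvPolynomial (Fin n) K}
  {B : Set (Projectivization K (Fin n → K))} {u v N p : Fin n → K}

lemma LineOnSurf.eval_add_smul (hF : F.IsHomogeneous 3) {W : Submodule K (Fin n → K)}
    (hW : LineOnSurf F W) (hp : p ∈ W) (z : K) (N : Fin n → K) :
    eval (p + z • N) F = z * (tangentForm F p N + z * tangentForm F N p + z ^ 2 * eval N F) := by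
  have h := eval_smul_add_smul hF 1 z p N
  rw [one_smul] at h
  rw [h, hW.eval_eq_zero hF hp]
  ring

lemma LineOnSurf.tangentForm_add_smul (hF : F.IsHomogeneous 3) {W : Submodule K (Fin n → K)}
    (hW : LineOnSurf F W) (hp : p ∈ W) (hu : u ∈ W) (z : K) (N : Fin n → K) :
    tangentForm F (p + z • N) u = z * (polarForm F p u N + z * tangentForm F N u) := by
  have h := tangentForm_smul_add_smul hF 1 z p N u
  rw [one_smul] at h
  rw [h, hW.tangentForm_eq_zero hF hp hu, polarForm_right_comm hF]
  ring

/- If it vanished, the residual conic, which passes through `u`, would contain the line joining `u`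
to `p + zN`. -/
lemma tangentForm_residual_ne_zero (hF : F.IsHomogeneous 3)
    (hℓ : LineOnSurf F (Submodule.span K {u, v})) (huN : tangentForm F u N = 0)
    (hdisc : residualDisc F u v N ≠ 0) (hp : p ∈ Submodule.span K {u, v}) {z : K} (hz : z ≠ 0)
    (hc : eval (p + z • N) F = 0) : tangentForm F (p + z • N) u ≠ 0 := by
  intro hcu
  rw [hℓ.eval_add_smul hF hp] at hc
  rw [hℓ.tangentForm_add_smul hF hp (Submodule.mem_span_of_mem (by simp))] at hcu
  obtain ⟨x, y, rfl⟩ := Submodule.mem_span_pair.1 hp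
  replace hc := (mul_eq_zero.1 hc).resolve_left hz
  replace hcu := (mul_eq_zero.1 hcu).resolve_left hz
  simp only [tangentForm_smul_add_smul hF, map_add, map_smul, smul_eq_mul, huN] at hc
  rw [polarForm_comm hF, polarForm_add_middle hF, polarForm_smul_middle hF,
    polarForm_smul_middle hF, polarForm_self hF, huN] at hcu
  refine mul_ne_zero (pow_ne_zero 2 hz) hdisc ?_
  simp only [residualDisc, huN]
  linear_combination (-polarForm F u v N ^ 2) * hc
    + (x * polarForm F u v N ^ 2 + z * polarForm F u v N * tangentForm F N v
      - (z * tangentForm F N u - y * polarForm F u v N) * tangentForm F v N) * hcu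

lemma residual_point_mem_spanCone (hF : F.IsHomogeneous 3)
    (hℓ : LineOnSurf F (Submodule.span K {u, v})) (huN : tangentForm F u N = 0)
    (hdisc : residualDisc F u v N ≠ 0) (hu : u ∈ spanCone F B) (hp : p ∈ Submodule.span K {u, v})
    {z : K} (hz : z ≠ 0) (hc : eval (p + z • N) F = 0) : p + z • N ∈ spanCone F B := by
  have hmem : u ∈ Submodule.span K {u, v} := Submodule.mem_span_of_mem (by simp)
  refine mem_spanCone_of_tangent hF (hℓ.eval_eq_zero hF hmem) hc ?_
    (tangentForm_residual_ne_zero hF hℓ huN hdisc hp hz hc) hu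
  rw [map_add, map_smul, hℓ.tangentForm_eq_zero hF hmem hp, huN, smul_zero, add_zero]

/- As the residual conic passes through `u`, its equation is affine in the `u`-coordinate. -/
lemma exists_residual_point (hF : F.IsHomogeneous 3)
    (hℓ : LineOnSurf F (Submodule.span K {u, v})) (huN : tangentForm F u N = 0)
    (hdisc : residualDisc F u v N ≠ 0) :
    ∃ p ∈ Submodule.span K {u, v}, eval (p + N) F = 0 := by
  obtain ⟨y, hy⟩ : ∃ y : K, y * polarForm F u v N + tangentForm F N u ≠ 0 := by
    by_contra! h
    have hδ : tangentForm F N u = 0 := by simpa using h 0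
    have hβ : polarForm F u v N = 0 := by simpa [hδ] using h 1
    exact hdisc (by simp [residualDisc, huN, hβ, hδ])
  have hp : (-(y ^ 2 * tangentForm F v N + y * tangentForm F N v + eval N F) /
      (y * polarForm F u v N + tangentForm F N u)) • u + y • v ∈ Submodule.span K {u, v} :=
    Submodule.mem_span_pair.2 ⟨_, _, rfl⟩
  have h := hℓ.eval_add_smul hF hp 1 N
  rw [one_smul] at h
  refine ⟨_, hp, h.trans ?_⟩
  simp only [tangentForm_smul_add_smul hF, map_add, map_smul, smul_eq_mul, huN]
  field_simp
  ring

/- The line joining `q` to a point `c` of the residual conic off `⟨u, v⟩` meets the surface again in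
a point of the conic off `⟨u, v⟩`. -/
lemma mem_spanCone_of_tangentForm_ne_zero (hF : F.IsHomogeneous 3)
    (hℓ : LineOnSurf F (Submodule.span K {u, v})) (huN : tangentForm F u N = 0)
    (hdisc : residualDisc F u v N ≠ 0) (hu : u ∈ spanCone F B) {q : Fin n → K}
    (hq : q ∈ Submodule.span K {u, v}) (hqN : tangentForm F q N ≠ 0) : q ∈ spanCone F B := by
  obtain ⟨p, hp, hc⟩ := exists_residual_point hF hℓ huN hdisc
  have hq0 : eval q F = 0 := hℓ.eval_eq_zero hF hq
  have hqc : tangentForm F q (p + N) = tangentForm F q N := by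
    rw [map_add, hℓ.tangentForm_eq_zero hF hq hp, zero_add]
  have hcmem : p + N ∈ spanCone F B := by
    simpa using residual_point_mem_spanCone hF hℓ huN hdisc hu hp one_ne_zero
      (by simpa using hc)
  refine mem_spanCone_of_secant hF hq0 hc (hqc ▸ hqN) hcmem ?_
  set c := p + N with hc_def
  have hthird : tangentForm F c q • q - tangentForm F q c • c =
      (tangentForm F c q • q - tangentForm F q c • p) + (-tangentForm F q c) • N := by
    rw [hc_def]; module
  have hzero : eval (tangentForm F c q • q - tangentForm F q c • c) F = 0 := by
    rw [sub_eq_add_neg, ← neg_smul, eval_smul_add_smul hF, hq0, hc]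
    ring
  rw [hthird] at hzero ⊢
  exact residual_point_mem_spanCone hF hℓ huN hdisc hu
    (sub_mem (Submodule.smul_mem _ _ hq) (Submodule.smul_mem _ _ hp))
    (neg_ne_zero.2 (hqc ▸ hqN)) hzero

/- One moves the base point from `u` to `q = u + tv` and the plane `⟨u, v, N⟩` to the tangent plane
of `q`. At a general `t` the new residual conic is again smooth, but the new plane is no longer
tangent to the surface at `w`. -/
lemma mem_spanCone_of_mem_line (hF : F.IsHomogeneous 3)
    (hℓ : LineOnSurf F (Submodule.span K {u, v})) (huN : tangentForm F u N = 0)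
    (hdisc : residualDisc F u v N ≠ 0)
    (hK : 13 ≤ Cardinal.mk K) (hu : u ∈ spanCone F B) {w M : Fin n → K}
    (hw : w ∈ Submodule.span K {u, v}) (huM : tangentForm F u M ≠ 0)
    (hwM : tangentForm F w N = 0 → tangentForm F w M ≠ 0) :
    w ∈ spanCone F B := by
  by_cases hwN : tangentForm F w N = 0
  swap
  · exact mem_spanCone_of_tangentForm_ne_zero hF hℓ huN hdisc hu hw hwN
  obtain ⟨t, hqN, hdisc'⟩ := exists_tangent_pencil hK hF huN huM hdisc
  set q := u + t • v
  have hqmem : q ∈ Submodule.span K {u, v} :=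
    add_mem (Submodule.mem_span_of_mem (by simp))
      (Submodule.smul_mem _ _ (Submodule.mem_span_of_mem (by simp)))
  have hspan : Submodule.span K {q, v} = Submodule.span K {u, v} := span_pair_add_smul u v t
  have hq : q ∈ spanCone F B := mem_spanCone_of_tangentForm_ne_zero hF hℓ huN hdisc hu hqmem hqN
  refine mem_spanCone_of_tangentForm_ne_zero hF (hspan ▸ hℓ) ?_ ?_ hq (hspan ▸ hw) ?_
    (N := tangentForm F q M • N - tangentForm F q N • M)
  · simp only [map_sub, map_smul, smul_eq_mul, mul_comm, sub_self]
  · rwa [residualDisc_add_smul_left hF]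
  · simpa [hwN] using ⟨hqN, hwM hwN⟩

end LineInSpan

section Nonsingular

variable {K : Type*} [Field K]

/-- The hypersurface `F = 0` is nonsingular at all points of `W` with coordinates in the base field
(`W` is meant to be contained in the hypersurface). -/
def IsNonsingularOn {n : ℕ} (F : MvPolynomial (Fin n) K)
    (W : Submodule K (Fin n → K)) : Prop :=
  ∀ w ∈ W, w ≠ 0 → tangentForm F w ≠ 0

lemma tangentForm_eq_zero_iff {R : Type*} [CommRing R] {n : ℕ} {F : MvPolynomial (Fin n) R}
    {u : Fin n → R} : tangentForm F u = 0 ↔ ∀ i, eval u (pderiv i F) = 0 := by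
  refine ⟨fun h i ↦ ?_, fun h ↦ by simp [tangentForm, h]⟩
  simpa [tangentForm_apply, Pi.single_apply] using LinearMap.congr_fun h (Pi.single i 1)

lemma ker_eq_span_of_linearIndependent {V : Type*} [AddCommGroup V] [Module K V]
    {k : ℕ} (hV : Module.finrank K V = k + 1) {x : Fin k → V}
    (hx : LinearIndependent K x) {g : Module.Dual K V} (hg : g ≠ 0) (hgx : ∀ i, g (x i) = 0) :
    LinearMap.ker g = Submodule.span K (Set.range x) := by
  have : FiniteDimensional K V := .of_finrank_pos (by omega)
  refine (Submodule.eq_of_le_of_finrank_eq (Submodule.span_le.2 ?_) ?_).symm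
  · rintro _ ⟨i, rfl⟩
    exact hgx i
  · have h := Module.Dual.finrank_ker_add_one_of_ne_zero hg
    rw [finrank_span_eq_card hx, Fintype.card_fin]
    omega

variable {F : MvPolynomial (Fin 4) K} {u v N : Fin 4 → K}

lemma ker_tangentForm_eq_span (hF : F.IsHomogeneous 3) (hind : LinearIndependent K ![N, u, v])
    (hℓ : LineOnSurf F (Submodule.span K {u, v}))
    (hns : IsNonsingularOn F (Submodule.span K {u, v})) {w : Fin 4 → K}
    (hw : w ∈ Submodule.span K {u, v}) (hw0 : w ≠ 0) (hwN : tangentForm F w N = 0) :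
    LinearMap.ker (tangentForm F w) = Submodule.span K {N, u, v} := by
  have hu := hℓ.tangentForm_eq_zero hF hw (Submodule.mem_span_of_mem (Set.mem_insert u {v}))
  have hv := hℓ.tangentForm_eq_zero hF hw (Submodule.mem_span_of_mem (Set.mem_insert_of_mem u rfl))
  rw [ker_eq_span_of_linearIndependent (by simp) hind (hns w hw hw0)
    (by simp [Fin.forall_fin_succ, hwN, hu, hv])]
  simp only [Matrix.range_cons, Matrix.range_empty, Set.union_empty, Set.singleton_union]

lemma polarForm_ne_zero_or_tangentForm_ne_zero [IsAlgClosed K] (hF : F.IsHomogeneous 3)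
    (hind : LinearIndependent K ![N, u, v]) (hℓ : LineOnSurf F (Submodule.span K {u, v}))
    (hns : IsNonsingularOn F (Submodule.span K {u, v})) (huN : tangentForm F u N = 0) :
    polarForm F u v N ≠ 0 ∨ tangentForm F v N ≠ 0 := by
  by_contra! ⟨hβ, hγ⟩
  have hu0 : u ≠ 0 := hind.ne_zero 1
  have hu : u ∈ Submodule.span K {u, v} := Submodule.mem_span_of_mem (Set.mem_insert u {v})
  obtain ⟨M, hM⟩ := DFunLike.ne_iff.1 (hns u hu hu0)
  obtain ⟨x, hx⟩ := IsAlgClosed.exists_root (tangentPencil F v u M)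
    (by simp [tangentPencil, Polynomial.degree_quadratic hM])
  rw [Polynomial.IsRoot, eval_tangentPencil hF] at hx
  have hw : v + x • u ∈ Submodule.span K {u, v} :=
    Submodule.mem_span_pair.2 ⟨x, 1, by module⟩
  have hw0 : v + x • u ≠ 0 := fun h ↦ one_ne_zero
    (LinearIndependent.pair_iff.1 (linearIndependent_finCons.1 hind).1 x 1 (by rw [← h]; module)).2
  have hwN : tangentForm F (v + x • u) N = 0 := by
    rw [← eval_tangentPencil hF]
    simp [tangentPencil, hγ, huN, polarForm_comm hF v, hβ]
  have hker := ker_tangentForm_eq_span hF hind hℓ hns hw hw0 hwN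
  rw [← ker_tangentForm_eq_span hF hind hℓ hns hu hu0 huN] at hker
  exact hM (LinearMap.mem_ker.1 (hker ▸ LinearMap.mem_ker.2 hx))

lemma exists_common_root_of_resultant_eq_zero [IsAlgClosed K] {b c d e f : K} (h : b ≠ 0 ∨ c ≠ 0)
    (hdisc : b * d * e - c * d ^ 2 - f * b ^ 2 = 0) :
    ∃ y, b * y + d = 0 ∧ c * y ^ 2 + e * y + f = 0 := by
  by_cases hb : b = 0
  · have hc : c ≠ 0 := h.resolve_left (· hb)
    have hd : d = 0 := by simpa [hb, hc] using hdisc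
    obtain ⟨y, hy⟩ := IsAlgClosed.exists_root
      (Polynomial.C c * Polynomial.X ^ 2 + Polynomial.C e * Polynomial.X + Polynomial.C f)
      (by simp [Polynomial.degree_quadratic hc])
    exact ⟨y, by simp [hb, hd], by simpa using hy⟩
  · refine ⟨-d / b, by field_simp; ring, ?_⟩
    field_simp
    linear_combination -hdisc

/- Here `q = x(by + dz) + (cy² + eyz + fz²)`, and the discriminant is the resultant of the two
coefficients: at a common root `y` (with `z = 1`) the conic contains the line `⟨u, yv + N⟩`. -/
lemma exists_other_line_of_residualDisc_eq_zero [IsAlgClosed K] (hF : F.IsHomogeneous 3)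
    (hind : LinearIndependent K ![N, u, v]) (hℓ : LineOnSurf F (Submodule.span K {u, v}))
    (hns : IsNonsingularOn F (Submodule.span K {u, v})) (huN : tangentForm F u N = 0)
    (hdisc : residualDisc F u v N = 0) :
    ∃ W' ≠ Submodule.span K {u, v}, IsLine W' ∧ LineOnSurf F W' ∧ u ∈ W' := by
  obtain ⟨y, hδ, hζ⟩ := exists_common_root_of_resultant_eq_zero
    (polarForm_ne_zero_or_tangentForm_ne_zero hF hind hℓ hns huN)
    (d := tangentForm F N u) (e := tangentForm F N v) (f := eval N F)
    (by simpa [residualDisc, huN] using hdisc)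
  have hN := (linearIndependent_finCons.1 hind).2
  rw [Matrix.range_cons_cons_empty] at hN
  have hu : u ∈ Submodule.span K {u, v} := Submodule.mem_span_of_mem (Set.mem_insert u {v})
  have hv : v ∈ Submodule.span K {u, v} := Submodule.mem_span_of_mem (Set.mem_insert_of_mem u rfl)
  have hyv : y • v ∈ Submodule.span K {u, v} := Submodule.smul_mem _ _ hv
  have hp : y • v + N ∉ Submodule.span K {u, v} := (Submodule.add_mem_iff_right _ hyv).not.2 hN
  refine ⟨Submodule.span K {u, y • v + N}, fun h ↦ hp (h ▸ Submodule.mem_span_of_mem (by simp)),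
    isLine_span_pair ((LinearIndependent.pair_iff' (hind.ne_zero 1)).2 fun a ha ↦
      hp (ha ▸ Submodule.smul_mem _ _ hu)), ?_, Submodule.mem_span_of_mem (by simp)⟩
  rw [lineOnSurf_span_pair_iff hF, lineRestrict_eq_zero_iff hF]
  have hpF := hℓ.eval_add_smul hF hyv 1 N
  have hpu := hℓ.tangentForm_add_smul hF hyv hu 1 N
  rw [one_smul] at hpF hpu
  rw [hpF, hpu, map_add, hℓ.tangentForm_eq_zero hF hu hyv, huN, hℓ.eval_eq_zero hF hu,
    polarForm_comm hF, polarForm_smul_middle hF, tangentForm_smul hF, map_smul, smul_eq_mul]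
  exact ⟨rfl, add_zero 0, by linear_combination hδ, by linear_combination hζ⟩

end Nonsingular

section BaseChange

variable {K L : Type*} [Field K] [Field L] {n : ℕ}

lemma span_clVec_image_span (φ : K →+* L) (s : Set (Fin n → K)) :
    Submodule.span L (clVec φ '' (Submodule.span K s : Set (Fin n → K))) =
      Submodule.span L (clVec φ '' s) := by
  refine le_antisymm (Submodule.span_le.2 ?_) (Submodule.span_mono
    (Set.image_mono Submodule.subset_span))
  rintro _ ⟨w, hw, rfl⟩
  induction hw using Submodule.span_induction with
  | mem w hw => exact Submodule.mem_span_of_mem ⟨w, hw, rfl⟩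
  | zero =>
    have h : clVec φ (0 : Fin n → K) = 0 := by ext; simp [clVec]
    exact h ▸ zero_mem _
  | add w w' _ _ h h' =>
    have h_add : clVec φ (w + w') = clVec φ w + clVec φ w' := by ext; simp [clVec]
    exact h_add ▸ add_mem h h'
  | smul a w _ h =>
    have h_smul : clVec φ (a • w) = φ a • clVec φ w := by ext; simp [clVec]
    exact h_smul ▸ Submodule.smul_mem _ _ h

lemma lineOnSurf_map_span_pair (φ : K →+* L) {F : MvPolynomial (Fin n) K} (hF : F.IsHomogeneous 3)
    {u v : Fin n → K} (h : LineOnSurf F (Submodule.span K {u, v})) :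
    LineOnSurf (map φ F) (Submodule.span L {clVec φ u, clVec φ v}) := by
  rw [lineOnSurf_span_pair_iff hF, lineRestrict_eq_zero_iff hF] at h
  rw [lineOnSurf_span_pair_iff (hF.map φ), lineRestrict_eq_zero_iff (hF.map φ)]
  have hmap (u v) : tangentForm (map φ F) (clVec φ u) (clVec φ v) = φ (tangentForm F u v) :=
    tangentForm_map φ F u v
  simp only [clVec_eval, hmap, h, map_zero, and_self]

lemma linearIndependent_clVec [Algebra K L] {k : ℕ} {x : Fin k → Fin n → K}
    (hx : LinearIndependent K x) : LinearIndependent L fun i ↦ clVec (algebraMap K L) (x i) :=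
  linearIndependent_algebraMap_comp_iff.2 hx

lemma residualDisc_ne_zero_of_unique_line [Algebra K L] [IsAlgClosed L] {F : MvPolynomial (Fin 4) K}
    (hF : F.IsHomogeneous 3) {u v N : Fin 4 → K} (hind : LinearIndependent K ![N, u, v])
    (hℓ : LineOnSurf F (Submodule.span K {u, v})) (huN : tangentForm F u N = 0)
    (hns : IsNonsingularOn (map (algebraMap K L) F)
      (Submodule.span L (clVec (algebraMap K L) '' (Submodule.span K {u, v}))))
    (honly : ∀ W', IsLine W' → LineOnSurf (map (algebraMap K L) F) W' →
      clVec (algebraMap K L) u ∈ W' →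
      W' = Submodule.span L (clVec (algebraMap K L) '' (Submodule.span K {u, v}))) :
    residualDisc F u v N ≠ 0 := by
  intro hdisc
  rw [span_clVec_image_span, Set.image_pair] at hns honly
  have hind' : LinearIndependent L ![clVec (algebraMap K L) N, clVec (algebraMap K L) u,
      clVec (algebraMap K L) v] := by
    convert linearIndependent_clVec (L := L) hind using 1
    ext i; fin_cases i <;> rfl
  obtain ⟨W', hne, hline, hsurf, hmem⟩ := exists_other_line_of_residualDisc_eq_zero (hF.map _) hind'
    (lineOnSurf_map_span_pair _ hF hℓ) hns
    ((tangentForm_map _ F u N).trans (by rw [huN, map_zero]))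
    ((residualDisc_map _ F u v N).trans (by rw [hdisc, map_zero]))
  exact hne (honly W' hline hsurf hmem)

lemma IsNonsingularOn.of_map {φ : K →+* L} {F : MvPolynomial (Fin n) K}
    {W : Submodule K (Fin n → K)}
    (h : IsNonsingularOn (map φ F) (Submodule.span L (clVec φ '' W))) : IsNonsingularOn F W := by
  intro w hw hw0 hsing
  refine h _ (Submodule.mem_span_of_mem ⟨w, hw, rfl⟩) (clVec_ne_zero φ hw0) ?_
  rw [tangentForm_eq_zero_iff] at hsing ⊢
  intro i
  rw [pderiv_map, clVec_eval, hsing i, map_zero]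

lemma onLine_clPt_iff (φ : K →+* L) {W : Submodule L (Fin n → L)}
    {P : Projectivization K (Fin n → K)} : OnLine W (clPt φ P) ↔ clVec φ P.rep ∈ W := by
  obtain ⟨a, ha⟩ := Projectivization.exists_smul_eq_mk_rep L _ (clVec_ne_zero φ P.rep_nonzero)
  rw [OnLine, clPt, ← ha, Units.smul_def, Submodule.smul_mem_iff _ a.ne_zero]

end BaseChange

section Frame

variable {K : Type*} [Field K] {n : ℕ}

lemma IsLine.exists_eq_span_pair {W : Submodule K (Fin n → K)} (hW : IsLine W) {u : Fin n → K}
    (hu : u ∈ W) (hu0 : u ≠ 0) :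
    ∃ v, LinearIndependent K ![u, v] ∧ W = Submodule.span K {u, v} := by
  obtain ⟨⟨v, hv⟩, hind⟩ := exists_linearIndependent_pair_of_one_lt_finrank (R := K) (M := W)
    (hW.symm ▸ one_lt_two) (x := ⟨u, hu⟩) (by simpa using hu0)
  have huv : LinearIndependent K ![u, v] := by
    simpa [LinearIndependent.pair_iff, Subtype.ext_iff] using hind
  refine ⟨v, huv, (Submodule.eq_of_le_of_finrank_eq ?_ ((isLine_span_pair huv).trans hW.symm)).symm⟩
  rw [Submodule.span_le, Set.pair_subset_iff]
  exact ⟨hu, hv⟩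

lemma exists_mem_ker_linearIndependent {V : Type*} [AddCommGroup V] [Module K V]
    {k : ℕ} (hV : k + 1 < Module.finrank K V) (g : Module.Dual K V)
    {x : Fin k → V} (hx : LinearIndependent K x) :
    ∃ N, g N = 0 ∧ LinearIndependent K (Fin.cons N x : Fin (k + 1) → V) := by
  have : FiniteDimensional K V := .of_finrank_pos (by omega)
  have hnot : ¬ LinearMap.ker g ≤ Submodule.span K (Set.range x) := fun h ↦ by
    have hle := Submodule.finrank_mono h
    have hrange := (LinearMap.range g).finrank_le
    have hadd := g.finrank_range_add_finrank_ker
    rw [finrank_span_eq_card hx, Fintype.card_fin] at hle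
    rw [Module.finrank_self] at hrange
    omega
  obtain ⟨N, hgN, hN⟩ := SetLike.not_le_iff_exists.1 hnot
  exact ⟨N, hgN, linearIndependent_finCons.2 ⟨hx, hN⟩⟩

end Frame

section LinePoints

variable {K : Type*} [Field K]

lemma linePts_subset_gammaPts {n : ℕ} {F : MvPolynomial (Fin n) K} (hF : F.IsHomogeneous 3)
    {W : Submodule K (Fin n → K)} (hW : LineOnSurf F W) {P : Projectivization K (Fin n → K)}
    (hP : OnLine W P) : linePts W ⊆ GammaPts F P := fun Q hQ ↦
  ⟨hW.eval_eq_zero hF hQ, (tangentForm_apply F P.rep Q.rep).symm.trans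
    (hW.tangentForm_eq_zero hF hP hQ)⟩

lemma IsSmoothHypersurf.isNonsingularOn {n : ℕ} {F : MvPolynomial (Fin n) K}
    (h : IsSmoothHypersurf F) (hF : F.IsHomogeneous 3)
    {W : Submodule (AlgebraicClosure K) (Fin n → AlgebraicClosure K)}
    (hW : LineOnSurf (clF F) W) : IsNonsingularOn (clF F) W := fun w hw hw0 hsing ↦
  hw0 (h w (hW.eval_eq_zero (hF.map _) hw) (tangentForm_eq_zero_iff.1 hsing))

lemma IsLine.lineOnSurf_map {L : Type*} [Field L] {n : ℕ} (φ : K →+* L)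
    {F : MvPolynomial (Fin n) K} (hF : F.IsHomogeneous 3) {W : Submodule K (Fin n → K)}
    (hW : IsLine W) (h : LineOnSurf F W) :
    LineOnSurf (map φ F) (Submodule.span L (clVec φ '' W)) := by
  obtain ⟨u, hu, hu0⟩ := (Submodule.ne_bot_iff W).1 (by rintro rfl; simp [IsLine] at hW)
  obtain ⟨v, -, rfl⟩ := hW.exists_eq_span_pair hu hu0
  rw [span_clVec_image_span, Set.image_pair]
  exact lineOnSurf_map_span_pair φ hF h

variable {F : MvPolynomial (Fin 4) K} {B : Set (Projectivization K (Fin 4 → K))}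
  {u v N w : Fin 4 → K}

lemma mem_spanCone_of_mem_tangentPlane (hK : 13 ≤ Cardinal.mk K) (hF : F.IsHomogeneous 3)
    (hind : LinearIndependent K ![N, u, v]) (hℓ : LineOnSurf F (Submodule.span K {u, v}))
    (hns : IsNonsingularOn F (Submodule.span K {u, v})) (huN : tangentForm F u N = 0)
    (hdisc : residualDisc F u v N ≠ 0) (hu : u ∈ spanCone F B) (hw0 : w ≠ 0)
    (hw : eval w F = 0) (huw : tangentForm F u w = 0) : w ∈ spanCone F B := by
  have hu0 : u ≠ 0 := hind.ne_zero 1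
  have hmem : u ∈ Submodule.span K {u, v} := Submodule.mem_span_of_mem (by simp)
  have hker := ker_tangentForm_eq_span hF hind hℓ hns hmem hu0 huN
  obtain ⟨z, p, hp, rfl⟩ := Submodule.mem_span_insert.1 (hker ▸ LinearMap.mem_ker.2 huw)
  rw [add_comm] at hw hw0 ⊢
  by_cases hz : z = 0
  · obtain ⟨M, hM⟩ := DFunLike.ne_iff.1 (hns u hmem hu0)
    simp only [hz, zero_smul, add_zero] at hw0 ⊢
    refine mem_spanCone_of_mem_line hF hℓ huN hdisc hK hu hp hM fun hpN hpM ↦ hM ?_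
    rw [← ker_tangentForm_eq_span hF hind hℓ hns hp hw0 hpN] at hker
    exact LinearMap.mem_ker.1 (hker ▸ LinearMap.mem_ker.2 hpM)
  · exact residual_point_mem_spanCone hF hℓ huN hdisc hu hp hz hw

end LinePoints

end CubicSurf

open CubicSurf MvPolynomial in
theorem line_points_spanned_by_point_general
    {K : Type*} [Field K] (hK : 13 ≤ Cardinal.mk K)
    (F : MvPolynomial (Fin 4) K) (hF : F.IsHomogeneous 3)
    (W : Submodule K (Fin 4 → K)) (hl : IsLine W) (hS : LineOnSurf F W)
    (hns : IsNonsingularOn (clF F) (Submodule.span (AlgebraicClosure K)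
      (clVec (algebraMap K (AlgebraicClosure K)) '' (W : Set (Fin 4 → K)))))
    (P : Projectivization K (Fin 4 → K)) (hPW : OnLine W P)
    (honly : ¬ ∃ W' : Submodule (AlgebraicClosure K) (Fin 4 → AlgebraicClosure K),
      W' ≠ Submodule.span (AlgebraicClosure K)
        (clVec (algebraMap K (AlgebraicClosure K)) '' (W : Set (Fin 4 → K))) ∧
      IsLine W' ∧ LineOnSurf (clF F) W' ∧
      OnLine W' (clPt (algebraMap K (AlgebraicClosure K)) P)) :
    linePts W ⊆ GammaPts F P ∧ GammaPts F P ⊆ Span F {P} := by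
  refine ⟨linePts_subset_gammaPts hF hS hPW, fun Q ⟨hQF, hQP⟩ ↦ rep_mem_spanCone.1 ?_⟩
  obtain ⟨v, huv, rfl⟩ := hl.exists_eq_span_pair hPW P.rep_nonzero
  obtain ⟨N, huN, hind⟩ := exists_mem_ker_linearIndependent (by simp) (tangentForm F P.rep) huv
  have hdisc : residualDisc F P.rep v N ≠ 0 :=
    residualDisc_ne_zero_of_unique_line hF hind hS huN hns fun W' hline hsurf hmem ↦
      by_contra fun hne ↦ honly ⟨W', hne, hline, hsurf, (onLine_clPt_iff _).2 hmem⟩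
  exact mem_spanCone_of_mem_tangentPlane hK hF hind hS (.of_map hns) huN hdisc
    (rep_mem_spanCone.2 (.base P rfl)) Q.rep_nonzero hQF
    ((tangentForm_apply F P.rep Q.rep).trans hQP)

open CubicSurf MvPolynomial in
/-- Let `K` be a field with at least 13 elements, `S` a smooth cubic
surface over `K`, `ℓ` a `K`-line contained in `S`, and `P ∈ ℓ(K)` a point not lying on
any other (geometric) line contained in `S`. Then `ℓ(K) ⊆ Γ_P(K) ⊆ Span({P})`. -/
theorem line_points_spanned_by_point
    {K : Type*} [Field K] (hK : 13 ≤ Cardinal.mk K)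
    (F : MvPolynomial (Fin 4) K) (hF : SmoothCubic F)
    (W : Submodule K (Fin 4 → K)) (hl : IsLine W) (hS : LineOnSurf F W)
    (P : Projectivization K (Fin 4 → K)) (hPW : OnLine W P) (hPS : P ∈ zeroSet F)
    (honly : ¬ ∃ W' : Submodule (AlgebraicClosure K) (Fin 4 → AlgebraicClosure K),
      W' ≠ Submodule.span (AlgebraicClosure K)
        (clVec (algebraMap K (AlgebraicClosure K)) '' (W : Set (Fin 4 → K))) ∧
      IsLine W' ∧ LineOnSurf (clF F) W' ∧
      OnLine W' (clPt (algebraMap K (AlgebraicClosure K)) P)) :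
    linePts W ⊆ GammaPts F P ∧ GammaPts F P ⊆ Span F {P} := by
  exact line_points_spanned_by_point_general hK F hF.1 W hl hS
    (hF.2.isNonsingularOn hF.1 (hl.lineOnSurf_map _ hF.1 hS)) P hPW honly
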